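/- For every real parameter a > 1/2, the functions g(s) := A(s)·cosh(φ(s)) and ĝ(s) := A(s)·sinh(φ(s)) both satisfy the mode-zero Jacobi equation f''(s) + (B'(s)/B(s))·f'(s) − 2·f(s) = 0 for all s ∈ ℝ. -/

import Mathlib

namespace MoriCatenoid

/-- Profile function `B(s) = √(a·cosh(2s) − 1/2)` of the Mori family. -/
noncomputable def B (a s : ℝ) : ℝ := Real.sqrt (a * Real.cosh (2 * s) - 1 / 2)

/-- Profile function `A(s) = √(a·cosh(2s) + 1/2)` of the Mori family. -/
noncomputable def A (a s : ℝ) : ℝ := Real.sqrt (a * Real.cosh (2 * s) + 1 / 2)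

/-- The constant `K = √(a² − 1/4)`. -/
noncomputable def K (a : ℝ) : ℝ := Real.sqrt (a ^ 2 - 1 / 4)

/-- The angle function `φ(s) = K·∫₀ˢ dt/(A(t)²·B(t))`. -/
noncomputable def φ (a s : ℝ) : ℝ := K a * ∫ t in (0:ℝ)..s, 1 / ((A a t) ^ 2 * B a t)

/-- The mode-one Jacobi field `f_*(s) = d/ds (A(s)·cosh(φ(s)))`. -/
noncomputable def fstar (a s : ℝ) : ℝ := deriv (fun t => A a t * Real.cosh (φ a t)) s

/-- Squared norm of the second fundamental form, `|II|²(s) = 2·(B''(s)/B(s) − 1)`. -/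
noncomputable def IIsq (a s : ℝ) : ℝ := 2 * (deriv (deriv (B a)) s / B a s - 1)

/-- The mode-`k` potential `W_k(s) = |II|²(s) − 2 − k²/B(s)²`. -/
noncomputable def W (a : ℝ) (k : ℤ) (s : ℝ) : ℝ := IIsq a s - 2 - (k : ℝ) ^ 2 / (B a s) ^ 2

/-- Inverse hyperbolic cosine: `arcosh x = log (x + √(x² − 1))`. -/
noncomputable def arcosh (x : ℝ) : ℝ := Real.log (x + Real.sqrt (x ^ 2 - 1))

/-- The axial boost field `u_*(s) = −a·sinh(2s)/B(s)`. -/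
noncomputable def ustar (a s : ℝ) : ℝ := -a * Real.sinh (2 * s) / B a s

/-- The radial quadratic form of mode `k`:
`S_k(u) = ∫_{−s₀}^{s₀} (B·u'² − B·W_k·u²) − coth(r)·B(s₀)·(u(s₀)² + u(−s₀)²)`,
where `u'` is the derivative of `u` within `[−s₀, s₀]`. -/
noncomputable def Sk (a s₀ r : ℝ) (k : ℤ) (u : ℝ → ℝ) : ℝ :=
  (∫ s in (-s₀)..s₀,
      (B a s * (derivWithin u (Set.Icc (-s₀) s₀) s) ^ 2 - B a s * W a k s * u s ^ 2))
    - Real.cosh r / Real.sinh r * B a s₀ * (u s₀ ^ 2 + u (-s₀) ^ 2)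

/-!
In Sturm–Liouville form the equation reads `(B f')' = 2 B f`. For `f = A cosh φ` with
`φ' = K / (A² B)` the flux is `B f' = (B A') cosh φ + (K / A) sinh φ`; on differentiating it the
two `sinh φ` terms cancel, so the equation for `f` reduces to the Ermakov equation
`(B A')' = 2 B A - K² / (B A³)` for the amplitude alone. Exchanging `cosh` and `sinh` changes
nothing. As `A A' = B B' = a sinh (2s)`, the Ermakov equation is an algebraic consequence of
`A² - B² = 1` and `A² B² = (a sinh (2s))² + K²`.
-/

open scoped Topology

section SturmLiouville

variable {𝕜 : Type*} [NontriviallyNormedField 𝕜] {p f r c h : 𝕜 → 𝕜} {k q v s : 𝕜}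

lemma deriv_deriv_add_div_mul_deriv (hp : DifferentiableAt 𝕜 p s) (hp₀ : p s ≠ 0)
    (hpf : HasDerivAt (fun t => p t * deriv f t) v s) :
    deriv (deriv f) s + deriv p s / p s * deriv f s = v / p s := by
  have hf : deriv f =ᶠ[𝓝 s] fun t => p t * deriv f t / p t := by
    filter_upwards [hp.continuousAt.eventually_ne hp₀] with t ht
    rw [mul_div_cancel_left₀ _ ht]
  rw [((hpf.fun_div hp.hasDerivAt hp₀).congr_of_eventuallyEq hf).deriv]
  field_simp
  ring

lemma mul_deriv_amplitude_mul (hp₀ : p s ≠ 0) (hr₀ : r s ≠ 0) (hr : DifferentiableAt 𝕜 r s)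
    (hc : HasDerivAt c (h s * (k / (r s ^ 2 * p s))) s) :
    p s * deriv (fun t => r t * c t) s = p s * deriv r s * c s + k / r s * h s := by
  rw [(hr.hasDerivAt.fun_mul hc).deriv]
  field_simp

lemma hasDerivAt_mul_deriv_amplitude_mul (hp₀ : ∀ᶠ t in 𝓝 s, p t ≠ 0) (hr₀ : r s ≠ 0)
    (hr : ∀ᶠ t in 𝓝 s, DifferentiableAt 𝕜 r t)
    (hpr : HasDerivAt (fun t => p t * deriv r t) (q * r s - k ^ 2 / (p s * r s ^ 3)) s)
    (hc : ∀ᶠ t in 𝓝 s, HasDerivAt c (h t * (k / (r t ^ 2 * p t))) t)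
    (hh : HasDerivAt h (c s * (k / (r s ^ 2 * p s))) s) :
    HasDerivAt (fun t => p t * deriv (fun x => r x * c x) t) (q * (r s * c s)) s := by
  have hrs : DifferentiableAt 𝕜 r s := hr.self_of_nhds
  have hps : p s ≠ 0 := hp₀.self_of_nhds
  have flux_eq : (fun t => p t * deriv (fun x => r x * c x) t) =ᶠ[𝓝 s]
      fun t => p t * deriv r t * c t + k / r t * h t := by
    filter_upwards [hp₀, hrs.continuousAt.eventually_ne hr₀, hr, hc] with t hpt hrt hr' hct
    exact mul_deriv_amplitude_mul hpt hrt hr' hct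
  have flux_deriv := (hpr.fun_mul hc.self_of_nhds).fun_add
    (((hasDerivAt_const s k).fun_div hrs.hasDerivAt hr₀).fun_mul hh)
  refine (flux_deriv.congr_of_eventuallyEq flux_eq).congr_deriv ?_
  field_simp
  ring

end SturmLiouville

lemma lt_mul_cosh {a b : ℝ} (ha : 0 ≤ a) (hb : b < a) (x : ℝ) : b < a * Real.cosh x :=
  hb.trans_le (le_mul_of_one_le_right ha (Real.one_le_cosh x))

lemma hasDerivAt_mul_sinh_two_mul (a s : ℝ) :
    HasDerivAt (fun t => a * Real.sinh (2 * t)) (2 * (a * Real.cosh (2 * s))) s :=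
  ((hasDerivAt_const_mul 2).sinh.const_mul a).congr_deriv (by ring)

lemma hasDerivAt_sqrt_mul_cosh_two_mul_add {a b s : ℝ} (h : a * Real.cosh (2 * s) + b ≠ 0) :
    HasDerivAt (fun t => √(a * Real.cosh (2 * t) + b))
      (a * Real.sinh (2 * s) / √(a * Real.cosh (2 * s) + b)) s := by
  have hcosh : HasDerivAt (fun t => a * Real.cosh (2 * t)) (2 * (a * Real.sinh (2 * s))) s :=
    ((hasDerivAt_const_mul 2).cosh.const_mul a).congr_deriv (by ring)
  exact ((hcosh.add_const b).sqrt h).congr_deriv (mul_div_mul_left _ _ two_ne_zero)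

section Profile

variable {a : ℝ} (ha : 1 / 2 < a) (s : ℝ)

include ha

lemma mul_cosh_two_mul_sub_half_pos : 0 < a * Real.cosh (2 * s) - 1 / 2 :=
  sub_pos.2 (lt_mul_cosh (by linarith) ha (2 * s))

lemma mul_cosh_two_mul_add_half_pos : 0 < a * Real.cosh (2 * s) + 1 / 2 := by
  linarith [mul_cosh_two_mul_sub_half_pos ha s]

lemma A_pos : 0 < A a s :=
  Real.sqrt_pos.2 (mul_cosh_two_mul_add_half_pos ha s)

lemma B_pos : 0 < B a s :=
  Real.sqrt_pos.2 (mul_cosh_two_mul_sub_half_pos ha s)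

lemma A_sq : A a s ^ 2 = a * Real.cosh (2 * s) + 1 / 2 :=
  Real.sq_sqrt (mul_cosh_two_mul_add_half_pos ha s).le

lemma B_sq : B a s ^ 2 = a * Real.cosh (2 * s) - 1 / 2 :=
  Real.sq_sqrt (mul_cosh_two_mul_sub_half_pos ha s).le

lemma A_sq_sub_B_sq : A a s ^ 2 - B a s ^ 2 = 1 := by
  rw [A_sq ha, B_sq ha]
  ring

lemma A_sq_mul_B_sq : A a s ^ 2 * B a s ^ 2 = (a * Real.sinh (2 * s)) ^ 2 + K a ^ 2 := by
  have hK : K a ^ 2 = a ^ 2 - 1 / 4 := Real.sq_sqrt (by nlinarith)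
  rw [A_sq ha, B_sq ha, hK]
  linear_combination a ^ 2 * Real.cosh_sq (2 * s)

lemma hasDerivAt_A : HasDerivAt (A a) (a * Real.sinh (2 * s) / A a s) s :=
  hasDerivAt_sqrt_mul_cosh_two_mul_add (mul_cosh_two_mul_add_half_pos ha s).ne'

lemma hasDerivAt_B : HasDerivAt (B a) (a * Real.sinh (2 * s) / B a s) s :=
  hasDerivAt_sqrt_mul_cosh_two_mul_add (mul_cosh_two_mul_sub_half_pos ha s).ne'

lemma hasDerivAt_φ : HasDerivAt (φ a) (K a / (A a s ^ 2 * B a s)) s := by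
  have hA : Continuous (A a) := by unfold A; fun_prop
  have hB : Continuous (B a) := by unfold B; fun_prop
  have hint : Continuous fun t => 1 / (A a t ^ 2 * B a t) :=
    continuous_const.div ((hA.pow 2).mul hB) fun t =>
      (mul_pos (pow_pos (A_pos ha t) 2) (B_pos ha t)).ne'
  exact ((hint.integral_hasStrictDerivAt 0 s).hasDerivAt.const_mul (K a)).congr_deriv
    (mul_one_div _ _)

lemma hasDerivAt_B_mul_deriv_A :
    HasDerivAt (fun t => B a t * deriv (A a) t)
      (2 * B a s * A a s - K a ^ 2 / (B a s * A a s ^ 3)) s := by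
  have hA₀ : A a s ≠ 0 := (A_pos ha s).ne'
  have hB₀ : B a s ≠ 0 := (B_pos ha s).ne'
  have flux_eq : (fun t => B a t * deriv (A a) t) =
      fun t => B a t * (a * Real.sinh (2 * t) / A a t) := by
    funext t
    rw [(hasDerivAt_A ha t).deriv]
  have flux_deriv := (hasDerivAt_B ha s).fun_mul
    ((hasDerivAt_mul_sinh_two_mul a s).fun_div (hasDerivAt_A ha s) hA₀)
  rw [flux_eq]
  refine flux_deriv.congr_deriv ?_
  have hC : a * Real.cosh (2 * s) = A a s ^ 2 - 1 / 2 := by linarith [A_sq ha s]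
  rw [hC]
  field_simp
  linear_combination (a * Real.sinh (2 * s)) ^ 2 * A_sq_sub_B_sq ha s - A_sq_mul_B_sq ha s

lemma amplitude_mul_jacobi_equation {c h : ℝ → ℝ}
    (hc : ∀ t, HasDerivAt c (h t * (K a / (A a t ^ 2 * B a t))) t)
    (hh : HasDerivAt h (c s * (K a / (A a s ^ 2 * B a s))) s) :
    deriv (deriv (fun t => A a t * c t)) s
      + deriv (B a) s / B a s * deriv (fun t => A a t * c t) s
      - 2 * (A a s * c s) = 0 := by
  have hB₀ : B a s ≠ 0 := (B_pos ha s).ne'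
  have sturm_liouville : HasDerivAt (fun t => B a t * deriv (fun x => A a x * c x) t)
      (2 * B a s * (A a s * c s)) s :=
    hasDerivAt_mul_deriv_amplitude_mul (.of_forall fun t => (B_pos ha t).ne') (A_pos ha s).ne'
      (.of_forall fun t => (hasDerivAt_A ha t).differentiableAt)
      (hasDerivAt_B_mul_deriv_A ha s) (.of_forall hc) hh
  rw [deriv_deriv_add_div_mul_deriv (hasDerivAt_B ha s).differentiableAt hB₀ sturm_liouville]
  field_simp
  ring

end Profile

/-- The functions `g = A·cosh φ` and `ĝ = A·sinh φ` both satisfy the mode-zero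
Jacobi equation `f'' + (B'/B)·f' − 2·f = 0` on all of `ℝ`. -/
theorem mode_zero_jacobi_equation (a : ℝ) (ha : 1 / 2 < a) (s : ℝ) :
    (deriv (deriv (fun t => A a t * Real.cosh (φ a t))) s
        + deriv (B a) s / B a s * deriv (fun t => A a t * Real.cosh (φ a t)) s
        - 2 * (A a s * Real.cosh (φ a s)) = 0) ∧
    (deriv (deriv (fun t => A a t * Real.sinh (φ a t))) s
        + deriv (B a) s / B a s * deriv (fun t => A a t * Real.sinh (φ a t)) s
        - 2 * (A a s * Real.sinh (φ a s)) = 0) := by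
  have hφ := hasDerivAt_φ ha
  exact ⟨amplitude_mul_jacobi_equation ha s (fun t => (hφ t).cosh) (hφ s).sinh,
    amplitude_mul_jacobi_equation ha s (fun t => (hφ t).sinh) (hφ s).cosh⟩

end MoriCatenoid
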